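/- arXiv:2009.11302 — 2 statements merged into one kernel-verified Lean document; each statement's English description precedes it below -/
import Mathlib

section
/- The generalized robustness of nonclassicality of the single-mode squeezed vacuum state |ζ_r⟩ equals e^r for all r ≥ 0. -/
noncomputable section
open scoped ENNReal ComplexOrder
open Filter

variable {H : Type} [NormedAddCommGroup H] [InnerProductSpace ℂ H] [CompleteSpace H]

local notation "⟪" x ", " y "⟫" => @inner ℂ _ _ x y

/-- Bounded operators on `H`. -/
abbrev Op (H : Type) [NormedAddCommGroup H] [InnerProductSpace ℂ H] : Type := H →L[ℂ] H

/-- The rank-one projector `|ψ⟩⟨ψ|`. -/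
def projv (ψ : H) : Op H := (innerSL ℂ ψ).smulRight ψ

/-- The trace of an operator with respect to a Hilbert basis. -/
def trB {ι : Type} (e : HilbertBasis ι ℂ H) (T : Op H) : ℂ := ∑' n, ⟪e n, T (e n)⟫

/-- A density operator: positive, trace-class (summable diagonal), unit trace. -/
def IsDensity {ι : Type} (e : HilbertBasis ι ℂ H) (ρ : Op H) : Prop :=
  ρ.IsPositive ∧ Summable (fun n => (⟪e n, ρ (e n)⟫).re) ∧ trB e ρ = 1

/-- The trace norm `Tr |T| = Tr √(T†T)`. -/
def traceNorm {ι : Type} (e : HilbertBasis ι ℂ H) (T : Op H) : ℝ :=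
  ∑' n, (⟪e n, (CFC.sqrt (ContinuousLinearMap.adjoint T ∘L T)) (e n)⟫).re

/-- Sequential closure of a set of operators in the trace norm. -/
def tnClosure {ι : Type} (e : HilbertBasis ι ℂ H) (S : Set (Op H)) : Set (Op H) :=
  {T | ∃ u : ℕ → Op H, (∀ k, u k ∈ S) ∧
    Tendsto (fun k => traceNorm e (u k - T)) atTop (nhds 0)}

/-- The generalized robustness `R_F(ρ) = inf {1 + λ | (ρ + λτ)/(1+λ) ∈ F, τ a density operator}`. -/
def Robustness {ι : Type} (e : HilbertBasis ι ℂ H) (F : Set (Op H)) (ρ : Op H) : ℝ≥0∞ :=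
  sInf {r : ℝ≥0∞ | ∃ lam : ℝ, 0 ≤ lam ∧ ∃ τ : Op H, IsDensity e τ ∧
    ((1 + lam)⁻¹ : ℝ) • (ρ + lam • τ) ∈ F ∧ r = ENNReal.ofReal (1 + lam)}

/-- The coherent state `|α⟩ = e^{-|α|²/2} ∑ₘ (αᵐ/√m!) |m⟩` in the Fock basis `e`. -/
def coh (e : HilbertBasis ℕ ℂ H) (α : ℂ) : H :=
  ∑' m : ℕ, (Complex.exp (-((‖α‖ : ℂ) ^ 2 / 2)) * α ^ m / (Real.sqrt (Nat.factorial m) : ℂ)) • e m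

/-- The classical states: the trace-norm closed convex hull of coherent state projectors. -/
def ClassicalStates (e : HilbertBasis ℕ ℂ H) : Set (Op H) :=
  tnClosure e (convexHull ℝ {T : Op H | ∃ α : ℂ, T = projv (coh e α)})

/-- The squeezed vacuum `|ζ_r⟩ = e^{r(a² - a†²)/2}|0⟩`, via its Fock expansion
`|ζ_r⟩ = (cosh r)^{-1/2} ∑ₘ (-tanh r)ᵐ √(2m)!/(2ᵐ m!) |2m⟩`. -/
def sqVac (e : HilbertBasis ℕ ℂ H) (r : ℝ) : H :=
  ∑' m : ℕ, ((((-Real.tanh r) ^ m * Real.sqrt (Nat.factorial (2 * m)) /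
    (2 ^ m * (Nat.factorial m : ℝ))) / Real.sqrt (Real.cosh r) : ℝ) : ℂ) • e (2 * m)


set_option linter.unusedSectionVars false

section OpLemmas
variable {ι : Type}

lemma parseval (e : HilbertBasis ι ℂ H) (x : H) :
    HasSum (fun m => ‖⟪e m, x⟫‖ ^ 2) (‖x‖ ^ 2) := by
  have h := e.hasSum_inner_mul_inner x x
  have h2 := Complex.hasSum_re h
  convert h2 using 1
  · funext m
    rw [← inner_conj_symm x (e m), mul_comm, Complex.mul_conj]
    simp [Complex.normSq_eq_norm_sq]
    norm_cast
  · rw [inner_self_eq_norm_sq_to_K]; norm_cast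

lemma hs_bound (e : HilbertBasis ι ℂ H) (B f : Op H) (hf : ‖f‖ ≤ 1)
    (hB : Summable fun m => ‖(ContinuousLinearMap.adjoint B) (e m)‖ ^ 2) (s : Finset ι) :
    ∑ n ∈ s, ‖B (f (e n))‖ ^ 2 ≤ ∑' m, ‖(ContinuousLinearMap.adjoint B) (e m)‖ ^ 2 := by
  have h1 : HasSum (fun m => ∑ n ∈ s, ‖⟪e m, B (f (e n))⟫‖ ^ 2) (∑ n ∈ s, ‖B (f (e n))‖ ^ 2) :=
    hasSum_sum fun n _ => parseval e _
  rw [← h1.tsum_eq]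
  refine h1.summable.tsum_le_tsum (fun m => ?_) hB
  have h2 : ∀ n, ‖⟪e m, B (f (e n))⟫‖ =
      ‖⟪e n, (ContinuousLinearMap.adjoint f) ((ContinuousLinearMap.adjoint B) (e m))⟫‖ := by
    intro n
    rw [ContinuousLinearMap.adjoint_inner_right, ContinuousLinearMap.adjoint_inner_right,
      norm_inner_symm]
  simp_rw [h2]
  refine (e.orthonormal.sum_inner_products_le _).trans ?_
  gcongr
  refine (ContinuousLinearMap.le_opNorm _ _).trans ?_
  rw [LinearIsometryEquiv.norm_map]
  exact mul_le_of_le_one_left (norm_nonneg _) hf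

lemma absOp_facts (D : Op H) :
    (CFC.sqrt (ContinuousLinearMap.adjoint D ∘L D)).IsPositive ∧
    CFC.sqrt (ContinuousLinearMap.adjoint D ∘L D) * CFC.sqrt (ContinuousLinearMap.adjoint D ∘L D)
      = ContinuousLinearMap.adjoint D ∘L D := by
  constructor
  · rw [← ContinuousLinearMap.nonneg_iff_isPositive]
    exact CFC.sqrt_nonneg _
  · apply CFC.sqrt_mul_sqrt_self
    rw [ContinuousLinearMap.nonneg_iff_isPositive]
    exact ContinuousLinearMap.isPositive_adjoint_comp_self D

lemma posSqrt {A : Op H} (hA : A.IsPositive) : ∃ B : Op H, ContinuousLinearMap.adjoint B = B ∧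
    ∀ x, B (B x) = A x := by
  have h0 : 0 ≤ A := (ContinuousLinearMap.nonneg_iff_isPositive _).2 hA
  refine ⟨CFC.sqrt A, ?_, fun x => ?_⟩
  · have := (ContinuousLinearMap.nonneg_iff_isPositive _).1 (CFC.sqrt_nonneg A)
    exact this.isSelfAdjoint
  · have := CFC.sqrt_mul_sqrt_self A h0
    exact congrArg (fun T : Op H => T x) this

lemma posSqrt_diag {A B : Op H} (hB : ContinuousLinearMap.adjoint B = B) (h : ∀ x, B (B x) = A x)
    (x : H) : ‖B x‖ ^ 2 = (⟪x, A x⟫).re := by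
  rw [← h, ← ContinuousLinearMap.adjoint_inner_left, hB, inner_self_eq_norm_sq_to_K]
  norm_cast

lemma norm_absOp (D : Op H) (x : H) :
    ‖D x‖ = ‖CFC.sqrt (ContinuousLinearMap.adjoint D ∘L D) x‖ := by
  obtain ⟨h1, h2⟩ := absOp_facts D
  have h3 := posSqrt_diag h1.isSelfAdjoint (A := ContinuousLinearMap.adjoint D ∘L D)
    (fun x => congrArg (fun T : Op H => T x) h2) x
  have h4 : ‖D x‖ ^ 2 = (⟪x, (ContinuousLinearMap.adjoint D ∘L D) x⟫).re := by
    simp only [ContinuousLinearMap.comp_apply]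
    rw [ContinuousLinearMap.adjoint_inner_right, inner_self_eq_norm_sq_to_K]
    norm_cast
  rw [← h4] at h3
  exact ((sq_eq_sq₀ (norm_nonneg _) (norm_nonneg _)).1 h3).symm

/-- the operator norm is at most the trace norm -/
lemma norm_le_trace (e : HilbertBasis ι ℂ H) (D : Op H)
    (hs : Summable fun n => (⟪e n, (CFC.sqrt (ContinuousLinearMap.adjoint D ∘L D)) (e n)⟫).re)
    (x : H) : ‖D x‖ ≤ traceNorm e D * ‖x‖ := by
  rw [norm_absOp]
  obtain ⟨h1, h2⟩ := absOp_facts D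
  unfold traceNorm
  generalize CFC.sqrt (ContinuousLinearMap.adjoint D ∘L D) = A at *
  obtain ⟨B, hB, hBA⟩ := posSqrt h1
  set t := ∑' n, (⟪e n, A (e n)⟫).re with ht
  have ht0 : 0 ≤ t := tsum_nonneg fun n => h1.re_inner_nonneg_right _
  have key : ∀ v, ‖B v‖ ≤ √t * ‖v‖ := by
    intro v
    have : ‖B v‖ ^ 2 ≤ t * ‖v‖ ^ 2 := by
      rw [← (parseval e (B v)).tsum_eq, ht, ← tsum_mul_right]
      refine (parseval e (B v)).summable.tsum_le_tsum (fun n => ?_) (hs.mul_right _)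
      rw [← posSqrt_diag hB hBA, ← ContinuousLinearMap.adjoint_inner_left, hB, ← mul_pow]
      gcongr
      exact norm_inner_le_norm _ _
    rw [← Real.sqrt_sq (norm_nonneg v), ← Real.sqrt_mul ht0]
    exact Real.le_sqrt_of_sq_le this
  rw [← hBA]
  calc _ ≤ √t * ‖B x‖ := key _
    _ ≤ √t * (√t * ‖x‖) := by gcongr; exact key _
    _ = _ := by rw [← mul_assoc, Real.mul_self_sqrt ht0]

lemma approx_polar (D : Op H) {ε : ℝ} (hε : 0 < ε) : ∃ f : Op H, ‖f‖ ≤ 1 ∧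
    ‖f * D - CFC.sqrt (ContinuousLinearMap.adjoint D ∘L D)‖ ≤ ε := by
  obtain ⟨h1, h2⟩ := absOp_facts D
  have h3 := norm_absOp D
  generalize CFC.sqrt (ContinuousLinearMap.adjoint D ∘L D) = A at *
  set E : Op H := A + (ε : ℂ) • 1 with hE
  have hEx : ∀ x, E x = A x + (ε : ℂ) • x := fun x => by simp [hE]
  have hEpos : E.IsPositive := h1.add (ContinuousLinearMap.isPositive_one.smul_of_nonneg
    (by exact_mod_cast hε.le))
  have hunit : IsUnit E := by
    refine ContinuousLinearMap.isUnit_of_forall_le_norm_inner_map E (c := ⟨ε, hε.le⟩) hε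
      fun x => ?_
    have := h1.re_inner_nonneg_left x
    refine le_trans ?_ (Complex.re_le_norm _)
    rw [hEx, inner_add_left, inner_smul_left, Complex.add_re, inner_self_eq_norm_sq_to_K]
    simp only [RCLike.re_eq_complex_re] at this
    have h4 : ((starRingEnd ℂ) (ε:ℂ) * ((‖x‖:ℝ) : ℂ) ^ 2).re = ε * ‖x‖ ^ 2 := by
      rw [Complex.conj_ofReal]; norm_cast
    change ‖x‖ ^ 2 * ε ≤ _
    have h5 : ((starRingEnd ℂ) (ε:ℂ) * ((RCLike.ofReal ‖x‖ : ℂ)) ^ 2).re = ε * ‖x‖ ^ 2 := h4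
    rw [h5]; linarith
  obtain ⟨U, hU⟩ := hunit
  set R : Op H := ((U⁻¹ : (Op H)ˣ) : Op H) with hR
  have hRE : R * E = 1 := by rw [hR, ← hU]; exact U.inv_mul
  have hER : E * R = 1 := by rw [hR, ← hU]; exact U.mul_inv
  have hERx : ∀ x, E (R x) = x := fun x => congrArg (fun T : Op H => T x) hER
  have hAE : ∀ w, ‖A w‖ ≤ ‖E w‖ := by
    intro w
    have h6 := h1.re_inner_nonneg_left w
    have h7 : ‖E w‖ ^ 2 = ‖A w‖ ^ 2 + 2 * RCLike.re ⟪A w, (ε : ℂ) • w⟫ + ‖(ε : ℂ) • w‖ ^ 2 := by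
      rw [hEx]; exact norm_add_sq _ _
    have h8 : RCLike.re ⟪A w, (ε : ℂ) • w⟫ = ε * RCLike.re ⟪A w, w⟫ := by
      rw [inner_smul_right]; simp
    have h9 : ‖A w‖ ^ 2 ≤ ‖E w‖ ^ 2 := by
      rw [h7, h8]; nlinarith [sq_nonneg ‖(ε : ℂ) • w‖, mul_nonneg hε.le h6]
    exact (sq_le_sq₀ (norm_nonneg _) (norm_nonneg _)).1 h9
  have hAR : ∀ x, ‖A (R x)‖ ≤ ‖x‖ := fun x => (hAE _).trans (by rw [hERx])
  have hDR : ‖D * R‖ ≤ 1 := ContinuousLinearMap.opNorm_le_bound _ zero_le_one fun x => by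
    rw [one_mul]
    change ‖D (R x)‖ ≤ _
    rw [h3]; exact hAR x
  have hEs : star E = E := hEpos.isSelfAdjoint
  have hRs : star R = R := by
    have : star R * E = 1 := by
      have := congrArg star hER
      rwa [star_mul, hEs, star_one] at this
    calc star R = star R * (E * R) := by rw [hER, mul_one]
      _ = R := by rw [← mul_assoc, this, one_mul]
  refine ⟨star (D * R), by rwa [norm_star], ?_⟩
  have h10 : star (D * R) * D = R * (A * A) := by
    rw [star_mul, hRs, mul_assoc, h2]; rfl
  have hEA : A = E - (ε : ℂ) • 1 := by rw [hE]; abel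
  have h11 : R * (A * A) - A = -((ε : ℂ) • (A * R)) := by
    have hc : R * A = A * R := by
      rw [hEA, mul_sub, sub_mul, hRE, hER]; simp
    calc R * (A * A) - A = (R * A) * A - A := by rw [mul_assoc]
      _ = (A * R) * (E - (ε : ℂ) • 1) - A := by rw [hc, ← hEA]
      _ = _ := by rw [mul_sub, mul_assoc, hRE]; simp
  rw [h10, h11, norm_neg]
  refine ContinuousLinearMap.opNorm_le_bound _ hε.le fun x => ?_
  change ‖(ε : ℂ) • (A (R x))‖ ≤ _
  rw [norm_smul, Complex.norm_real, Real.norm_of_nonneg hε.le]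
  gcongr
  exact hAR x

lemma trace_partial (e : HilbertBasis ι ℂ H) (D : Op H) (C : ℝ)
    (h : ∀ f : Op H, ‖f‖ ≤ 1 → ∀ s : Finset ι, ‖∑ n ∈ s, ⟪e n, f (D (e n))⟫‖ ≤ C) (s : Finset ι) :
    ∑ n ∈ s, (⟪e n, (CFC.sqrt (ContinuousLinearMap.adjoint D ∘L D)) (e n)⟫).re ≤ C := by
  refine le_of_forall_pos_le_add fun δ hδ => ?_
  obtain ⟨f, hf, hfD⟩ := approx_polar D (ε := δ / (s.card + 1)) (by positivity)
  generalize CFC.sqrt (ContinuousLinearMap.adjoint D ∘L D) = A at *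
  have h1 : ∀ n ∈ s, (⟪e n, A (e n)⟫).re ≤ (⟪e n, f (D (e n))⟫).re + δ / (s.card + 1) := by
    intro n _
    have h2 : ‖⟪e n, (f * D - A) (e n)⟫‖ ≤ δ / (s.card + 1) := by
      refine (norm_inner_le_norm _ _).trans ?_
      have := (f * D - A).le_opNorm (e n)
      rw [e.orthonormal.norm_eq_one n] at *
      linarith
    have h3 := (Complex.abs_re_le_norm _).trans h2
    have h4 : (f * D - A) (e n) = f (D (e n)) - A (e n) := rfl
    rw [h4, inner_sub_right, Complex.sub_re] at h3
    linarith [(abs_le.1 h3).1]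
  refine (Finset.sum_le_sum h1).trans ?_
  rw [Finset.sum_add_distrib, Finset.sum_const, nsmul_eq_mul]
  have h5 := (Complex.re_le_norm _).trans (h f hf s)
  rw [Complex.re_sum] at h5
  have h6 : (s.card : ℝ) * (δ / (s.card + 1)) ≤ δ := by
    rw [mul_div_assoc', div_le_iff₀ (by positivity)]; nlinarith
  linarith

lemma absOp_summable (e : HilbertBasis ι ℂ H) (D : Op H) (C : ℝ)
    (h : ∀ f : Op H, ‖f‖ ≤ 1 → ∀ s : Finset ι, ‖∑ n ∈ s, ⟪e n, f (D (e n))⟫‖ ≤ C) :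
    Summable fun n => (⟪e n, (CFC.sqrt (ContinuousLinearMap.adjoint D ∘L D)) (e n)⟫).re :=
  summable_of_sum_le (fun _ => (absOp_facts D).1.re_inner_nonneg_right _) (trace_partial e D C h)

lemma traceNorm_le (e : HilbertBasis ι ℂ H) (D : Op H) (C : ℝ)
    (h : ∀ f : Op H, ‖f‖ ≤ 1 → ∀ s : Finset ι, ‖∑ n ∈ s, ⟪e n, f (D (e n))⟫‖ ≤ C) :
    traceNorm e D ≤ C :=
  (absOp_summable e D C h).tsum_le_of_sum_le (trace_partial e D C h)

lemma traceNorm_nonneg (e : HilbertBasis ι ℂ H) (D : Op H) : 0 ≤ traceNorm e D :=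
  tsum_nonneg fun _ => (absOp_facts D).1.re_inner_nonneg_right _

lemma pos_bound (e : HilbertBasis ι ℂ H) (A : Op H) (hA : A.IsPositive)
    (hs : Summable fun n => (⟪e n, A (e n)⟫).re) (f : Op H) (hf : ‖f‖ ≤ 1) (s : Finset ι) :
    ‖∑ n ∈ s, ⟪e n, f (A (e n))⟫‖ ≤ ∑' n, (⟪e n, A (e n)⟫).re := by
  obtain ⟨B, hB, hBA⟩ := posSqrt hA
  set t := ∑' n, (⟪e n, A (e n)⟫).re with ht
  have hd := posSqrt_diag hB hBA
  have h1 : ∑ n ∈ s, ‖B ((ContinuousLinearMap.adjoint f) (e n))‖ ^ 2 ≤ t := by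
    have := hs_bound e B (ContinuousLinearMap.adjoint f) (by rwa [LinearIsometryEquiv.norm_map])
      (by simpa only [hB, hd] using hs) s
    simpa only [hB, hd] using this
  have h2 : ∑ n ∈ s, ‖B (e n)‖ ^ 2 ≤ t := by
    simp_rw [hd]
    exact hs.sum_le_tsum s fun n _ => hA.re_inner_nonneg_right _
  calc _ ≤ ∑ n ∈ s, (‖B ((ContinuousLinearMap.adjoint f) (e n))‖ ^ 2 + ‖B (e n)‖ ^ 2) / 2 := by
        refine norm_sum_le_of_le _ fun n _ => ?_
        rw [← hBA, ← ContinuousLinearMap.adjoint_inner_left, ← ContinuousLinearMap.adjoint_inner_left,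
          hB]
        refine (norm_inner_le_norm _ _).trans ?_
        nlinarith [sq_nonneg (‖B ((ContinuousLinearMap.adjoint f) (e n))‖ - ‖B (e n)‖)]
    _ ≤ t := by rw [← Finset.sum_div, Finset.sum_add_distrib]; linarith

lemma sub_bound (e : HilbertBasis ι ℂ H) (A A' : Op H) (hA : A.IsPositive) (hA' : A'.IsPositive)
    (hs : Summable fun n => (⟪e n, A (e n)⟫).re) (hs' : Summable fun n => (⟪e n, A' (e n)⟫).re)
    (f : Op H) (hf : ‖f‖ ≤ 1) (s : Finset ι) :
    ‖∑ n ∈ s, ⟪e n, f ((A - A') (e n))⟫‖ ≤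
      ∑' n, (⟪e n, A (e n)⟫).re + ∑' n, (⟪e n, A' (e n)⟫).re := by
  have := norm_sub_le_of_le (pos_bound e A hA hs f hf s) (pos_bound e A' hA' hs' f hf s)
  rw [← Finset.sum_sub_distrib] at this
  simpa [inner_sub_right] using this

lemma projv_apply (ψ x : H) : projv ψ x = ⟪ψ, x⟫ • ψ := by
  simp [projv]

lemma projv_pos (ψ : H) : (projv ψ).IsPositive := by
  rw [ContinuousLinearMap.isPositive_iff_complex]
  intro x
  rw [projv_apply, inner_smul_left, ← Complex.normSq_eq_conj_mul_self]
  simp [Complex.normSq_nonneg]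

lemma projv_quad (ψ x : H) : ⟪x, projv ψ x⟫ = ((‖⟪ψ, x⟫‖ ^ 2 : ℝ) : ℂ) := by
  rw [projv_apply, inner_smul_right, ← inner_conj_symm x ψ, Complex.mul_conj,
    Complex.normSq_eq_norm_sq]

lemma projv_hasSum (e : HilbertBasis ι ℂ H) (ψ : H) :
    HasSum (fun n => (⟪e n, projv ψ (e n)⟫).re) (‖ψ‖ ^ 2) := by
  convert parseval e ψ using 2 with n
  rw [projv_quad, Complex.ofReal_re, norm_inner_symm]

lemma sum_inner_mul_le (e : HilbertBasis ι ℂ H) (x y : H) (s : Finset ι) :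
    ∑ n ∈ s, ‖⟪y, e n⟫‖ * ‖⟪e n, x⟫‖ ≤ ‖y‖ * ‖x‖ := by
  refine (Real.sum_mul_le_sqrt_mul_sqrt _ _ _).trans ?_
  gcongr
  · refine Real.sqrt_le_iff.2 ⟨norm_nonneg _, ?_⟩
    simp_rw [norm_inner_symm y]
    exact e.orthonormal.sum_inner_products_le _
  · refine Real.sqrt_le_iff.2 ⟨norm_nonneg _, ?_⟩
    exact e.orthonormal.sum_inner_products_le _

lemma projv_sub_bound (e : HilbertBasis ι ℂ H) (a b : H) (ha : ‖a‖ = 1) (hb : ‖b‖ = 1)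
    (f : Op H) (hf : ‖f‖ ≤ 1) (s : Finset ι) :
    ‖∑ n ∈ s, ⟪e n, f ((projv a - projv b) (e n))⟫‖ ≤ 2 * ‖a - b‖ := by
  have hfx : ∀ x, ‖f x‖ ≤ ‖x‖ := fun x => by
    simpa using f.le_of_opNorm_le hf x
  have h1 : ∀ n, ⟪e n, f ((projv a - projv b) (e n))⟫ =
      ⟪a - b, e n⟫ * ⟪e n, f a⟫ + ⟪b, e n⟫ * ⟪e n, f (a - b)⟫ := by
    intro n
    simp only [sub_apply, projv_apply, map_sub, map_smul, inner_sub_right,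
      inner_sub_left, inner_smul_right]
    ring
  simp_rw [h1]
  calc _ ≤ ∑ n ∈ s, (‖⟪a - b, e n⟫‖ * ‖⟪e n, f a⟫‖ + ‖⟪b, e n⟫‖ * ‖⟪e n, f (a - b)⟫‖) := by
        refine norm_sum_le_of_le _ fun n _ => ?_
        refine (norm_add_le _ _).trans ?_
        rw [norm_mul, norm_mul]
    _ ≤ ‖a - b‖ * ‖f a‖ + ‖b‖ * ‖f (a - b)‖ := by
        rw [Finset.sum_add_distrib]
        exact add_le_add (sum_inner_mul_le e _ _ s) (sum_inner_mul_le e _ _ s)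
    _ ≤ ‖a - b‖ * ‖a‖ + ‖b‖ * ‖a - b‖ := by gcongr <;> exact hfx _
    _ = _ := by rw [ha, hb]; ring

end OpLemmas

section CohLemmas

/-- Fock coefficients of the coherent state. -/
def cohC (α : ℂ) (m : ℕ) : ℂ :=
  Complex.exp (-((‖α‖ : ℂ) ^ 2 / 2)) * α ^ m / (Real.sqrt (Nat.factorial m) : ℂ)

lemma hasSum_congr_fn {f g : ℕ → ℂ} {a : ℂ} (h : HasSum f a) (hfg : ∀ n, g n = f n) :
    HasSum g a := by
  rw [funext hfg]; exact h

lemma cohC_mul (α β : ℂ) : HasSum (fun m => (starRingEnd ℂ) (cohC α m) * cohC β m)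
    (Complex.exp (-((‖α‖ : ℂ) ^ 2 / 2)) * Complex.exp (-((‖β‖ : ℂ) ^ 2 / 2)) *
      Complex.exp ((starRingEnd ℂ) α * β)) := by
  have h := (NormedSpace.expSeries_div_hasSum_exp ((starRingEnd ℂ) α * β)).mul_left
    (Complex.exp (-((‖α‖ : ℂ) ^ 2 / 2)) * Complex.exp (-((‖β‖ : ℂ) ^ 2 / 2)))
  rw [← Complex.exp_eq_exp_ℂ] at h
  refine hasSum_congr_fn h fun m => ?_
  have h1 : (Real.sqrt (Nat.factorial m) : ℂ) ^ 2 = (Nat.factorial m : ℂ) := by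
    norm_cast
    rw [Real.sq_sqrt (by positivity)]
  have h2 : (Real.sqrt (Nat.factorial m) : ℂ) ≠ 0 := by
    norm_cast
    exact (Real.sqrt_pos.2 (by positivity)).ne'
  rw [← h1]
  unfold cohC
  simp only [map_div₀, map_mul, map_pow, Complex.conj_ofReal, ← Complex.exp_conj, map_neg]
  rw [Complex.conj_ofNat, mul_pow]
  field_simp

lemma cohC_sq (α : ℂ) : HasSum (fun m => ‖cohC α m‖ ^ 2) 1 := by
  have h := Complex.hasSum_re (cohC_mul α α)
  convert h using 1
  · funext m
    rw [← Complex.normSq_eq_conj_mul_self, Complex.ofReal_re, Complex.normSq_eq_norm_sq]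
  · rw [← Complex.normSq_eq_conj_mul_self, Complex.normSq_eq_norm_sq, ← Complex.exp_add,
      ← Complex.exp_add]
    push_cast
    ring_nf
    simp

lemma coh_inner_basis (e : HilbertBasis ℕ ℂ H) (α : ℂ) (m : ℕ) : ⟪e m, coh e α⟫ = cohC α m := by
  have hm : Memℓp (cohC α) 2 := by
    apply memℓp_gen
    simpa using (cohC_sq α).summable
  set f : lp (fun _ : ℕ => ℂ) 2 := ⟨cohC α, hm⟩ with hf
  have h := e.hasSum_repr_symm f
  have h2 : coh e α = e.repr.symm f := h.tsum_eq
  rw [h2, ← e.repr_apply_apply, LinearIsometryEquiv.apply_symm_apply]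

lemma coh_norm (e : HilbertBasis ℕ ℂ H) (α : ℂ) : ‖coh e α‖ = 1 := by
  have h := parseval e (coh e α)
  simp_rw [coh_inner_basis] at h
  have h2 := h.unique (cohC_sq α)
  exact (pow_eq_one_iff_of_nonneg (norm_nonneg _) two_ne_zero).1 h2

lemma coh_inner (e : HilbertBasis ℕ ℂ H) (α β : ℂ) : ⟪coh e α, coh e β⟫ =
    Complex.exp (-((‖α‖ : ℂ) ^ 2 / 2)) * Complex.exp (-((‖β‖ : ℂ) ^ 2 / 2)) *
      Complex.exp ((starRingEnd ℂ) α * β) := by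
  have h := e.hasSum_inner_mul_inner (coh e α) (coh e β)
  simp_rw [← inner_conj_symm (coh e α) (e _), coh_inner_basis] at h
  exact h.unique (cohC_mul α β)

lemma coh_continuous (e : HilbertBasis ℕ ℂ H) : Continuous (coh e) := by
  rw [continuous_iff_continuousAt]
  intro α
  rw [ContinuousAt, tendsto_iff_norm_sub_tendsto_zero]
  have h1 : ∀ β, ‖coh e β - coh e α‖ = √(2 - 2 * (⟪coh e β, coh e α⟫).re) := by
    intro β
    rw [← Real.sqrt_sq (norm_nonneg (coh e β - coh e α)), norm_sub_sq (𝕜 := ℂ), coh_norm, coh_norm]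
    congr 1
    simp only [RCLike.re_eq_complex_re]
    ring
  simp_rw [h1]
  have h2 : Continuous fun β => √(2 - 2 * (⟪coh e β, coh e α⟫).re) := by
    simp_rw [coh_inner]
    fun_prop
  have h3 := h2.tendsto α
  simpa [inner_self_eq_norm_sq_to_K, coh_norm] using h3

/-- The coherent states on the imaginary axis. -/
def phi (e : HilbertBasis ℕ ℂ H) (y : ℝ) : H := coh e (Complex.I * y)

lemma phi_continuous (e : HilbertBasis ℕ ℂ H) : Continuous (phi e) :=
  (coh_continuous e).comp (by fun_prop)

lemma phi_norm (e : HilbertBasis ℕ ℂ H) (y : ℝ) : ‖phi e y‖ = 1 := coh_norm e _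

end CohLemmas

section GaussLemmas
open MeasureTheory ProbabilityTheory NNReal

lemma doubleFact_eq (k : ℕ) : (Nat.doubleFactorial (2 * k - 1) : ℝ) = (2 * k).factorial / (2 ^ k * k.factorial) := by
  rw [eq_div_iff (by positivity)]
  cases k with
  | zero => simp
  | succ k =>
    have h1 : (2 * (k+1) - 1) = 2 * k + 1 := by omega
    have h2 : 2 * (k + 1) = (2 * k + 1) + 1 := by ring
    rw [h1]
    have := Nat.factorial_eq_mul_doubleFactorial (2 * k + 1)
    rw [← h2, Nat.doubleFactorial_two_mul] at this
    rw [this]; push_cast; ring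

lemma gauss_even {b : ℝ} (hb : 0 < b) (k : ℕ) :
    ∫ y : ℝ, y ^ (2 * k) * Real.exp (-b * y ^ 2) =
      √(Real.pi / b) * ((2 * k).factorial / (2 ^ k * k.factorial)) / (2 * b) ^ k := by
  have h1 : ∫ y : ℝ, y ^ (2 * k) * Real.exp (-b * y ^ 2) =
      ∫ y : ℝ, (fun x : ℝ => x ^ (2 * k) * Real.exp (-b * x ^ 2)) |y| := by
    congr 1; funext y
    simp [pow_mul]
  rw [h1, integral_comp_abs (f := fun x : ℝ => x ^ (2 * k) * Real.exp (-b * x ^ 2))]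
  have h2 := integral_rpow_mul_exp_neg_mul_rpow (p := 2) (q := 2 * k) (b := b) (by norm_num)
    (by have : (0:ℝ) ≤ k := by positivity
        linarith) hb
  have h3 : ∫ x in Set.Ioi (0:ℝ), x ^ (2 * k) * Real.exp (-b * x ^ 2) =
      ∫ x in Set.Ioi (0:ℝ), x ^ (2 * (k:ℝ)) * Real.exp (-b * x ^ (2:ℝ)) := by
    congr 1; funext x
    rw [← Real.rpow_natCast, ← Real.rpow_natCast]; push_cast; rfl
  rw [h3, h2]
  have h4 : (2 * (k:ℝ) + 1) / 2 = k + 1 / 2 := by ring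
  have h5 : -(2 * (k:ℝ) + 1) / 2 = -(k : ℝ) + -(1 / 2) := by ring
  rw [h4, h5, Real.Gamma_nat_add_half, doubleFact_eq, Real.rpow_add hb, Real.rpow_neg hb.le,
    Real.rpow_neg hb.le, Real.rpow_natCast, ← Real.sqrt_eq_rpow, Real.sqrt_div Real.pi_pos.le,
    mul_pow]
  have := Real.sqrt_pos.2 hb
  field_simp

lemma gauss_moment (v : ℝ≥0) {c : ℝ} (hc : 0 ≤ c) (k : ℕ) :
    ∫ y : ℝ, y ^ (2 * k) * Real.exp (-(c / 2) * y ^ 2) ∂(gaussianReal 0 v) =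
      (√(1 + c * v))⁻¹ * (v / (1 + c * v)) ^ k * ((2 * k).factorial / (2 ^ k * k.factorial)) := by
  by_cases hv : v = 0
  · subst hv
    rw [gaussianReal_zero_var, integral_dirac]
    cases k <;> simp
  · have hv0 : (0:ℝ) < v := by exact_mod_cast pos_iff_ne_zero.2 hv
    rw [integral_gaussianReal_eq_integral_smul hv]
    have hcv : 0 < 1 + c * v := by positivity
    set b : ℝ := (1 + c * v) / (2 * v) with hb
    have hb0 : 0 < b := by positivity
    have h1 : ∀ y : ℝ, gaussianPDFReal 0 v y • (y ^ (2 * k) * Real.exp (-(c / 2) * y ^ 2)) =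
        (√(2 * Real.pi * v))⁻¹ * (y ^ (2 * k) * Real.exp (-b * y ^ 2)) := by
      intro y
      rw [gaussianPDFReal, smul_eq_mul]
      have : Real.exp (-b * y ^ 2) = Real.exp (-(y - 0) ^ 2 / (2 * v)) * Real.exp (-(c / 2) * y ^ 2) := by
        rw [← Real.exp_add]; congr 1; rw [hb]; field_simp; ring
      rw [this]; ring
    simp_rw [h1]
    rw [integral_const_mul, gauss_even hb0]
    have h2 : Real.pi / b = (2 * Real.pi * v) * (1 + c * v)⁻¹ := by rw [hb]; field_simp
    have h3 : √(2 * Real.pi * v) ≠ 0 := (Real.sqrt_pos.2 (by positivity)).ne'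
    have h4 : (2 * b) ^ k = ((v / (1 + c * v)) ^ k)⁻¹ := by
      rw [← inv_pow]; congr 1; rw [hb]; field_simp
    rw [h2, Real.sqrt_mul (x := 2 * Real.pi * v) (by positivity), Real.sqrt_inv, h4]
    field_simp

lemma gauss_odd (v : ℝ≥0) (c : ℝ) (k : ℕ) :
    ∫ y : ℝ, y ^ (2 * k + 1) * Real.exp (-(c / 2) * y ^ 2) ∂(gaussianReal 0 v) = 0 := by
  have h1 := gaussianReal_map_neg (μ := 0) (v := v)
  rw [neg_zero] at h1
  have h2 : ∫ y : ℝ, y ^ (2 * k + 1) * Real.exp (-(c / 2) * y ^ 2) ∂(gaussianReal 0 v) =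
      ∫ y : ℝ, (-y) ^ (2 * k + 1) * Real.exp (-(c / 2) * (-y) ^ 2) ∂(gaussianReal 0 v) := by
    conv_lhs => rw [← h1]
    exact integral_map_equiv (MeasurableEquiv.neg ℝ) _
  have h3 : ∀ y : ℝ, (-y) ^ (2 * k + 1) * Real.exp (-(c / 2) * (-y) ^ 2) =
      -(y ^ (2 * k + 1) * Real.exp (-(c / 2) * y ^ 2)) := by
    intro y; rw [Odd.neg_pow ⟨k, rfl⟩]; simp
  simp_rw [h3, integral_neg] at h2
  linarith

end GaussLemmas

section SqLemmas
open MeasureTheory ProbabilityTheory NNReal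

/-- The variance of the Gaussian mixture. -/
def vr (r : ℝ) : ℝ≥0 := Real.toNNReal (Real.exp r * Real.sinh r)

lemma vr_coe {r : ℝ} (hr : 0 ≤ r) : (vr r : ℝ) = Real.exp r * Real.sinh r :=
  Real.coe_toNNReal _ (mul_nonneg (Real.exp_pos r).le (Real.sinh_nonneg_iff.2 hr))

lemma vr_one_add {r : ℝ} (hr : 0 ≤ r) : 1 + (vr r : ℝ) = Real.exp r * Real.cosh r := by
  rw [vr_coe hr, Real.sinh_eq, Real.cosh_eq, Real.exp_neg]
  have := Real.exp_pos r
  field_simp; ring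

lemma vr_one_add_mul {r : ℝ} (hr : 0 ≤ r) (t : ℝ) :
    Real.cosh t * (1 + (1 - Real.tanh t) * (vr r : ℝ)) = Real.exp r * Real.cosh (t - r) := by
  have h1 : Real.cosh t * (1 - Real.tanh t) = Real.exp (-t) := by
    rw [Real.tanh_eq_sinh_div_cosh, mul_sub, mul_div_cancel₀ _ (Real.cosh_pos t).ne', mul_one,
      Real.cosh_sub_sinh]
  have h2 : Real.cosh t * (1 + (1 - Real.tanh t) * (vr r : ℝ)) =
    Real.cosh t + Real.exp (-t) * vr r := by rw [← h1]; ring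
  rw [h2, vr_coe hr, Real.sinh_eq, Real.cosh_eq, Real.cosh_eq, neg_sub, Real.exp_sub, Real.exp_sub,
    Real.exp_neg, Real.exp_neg]
  have := Real.exp_pos r
  have := Real.exp_pos t
  field_simp; ring

lemma phi_integrable (e : HilbertBasis ℕ ℂ H) (μ : Measure ℝ) [IsProbabilityMeasure μ] :
    Integrable (phi e) μ :=
  Integrable.of_bound (phi_continuous e).aestronglyMeasurable 1
    (Eventually.of_forall fun y => (phi_norm e y).le)

lemma cohC_phi (y : ℝ) (m : ℕ) : cohC (Complex.I * y) m =
    (Complex.I ^ m / (Real.sqrt (Nat.factorial m) : ℂ)) *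
      ((y ^ m * Real.exp (-(1 / 2) * y ^ 2) : ℝ) : ℂ) := by
  unfold cohC
  rw [norm_mul, Complex.norm_I, one_mul, Complex.norm_real, mul_pow]
  push_cast
  have : ((‖y‖ : ℝ) : ℂ) ^ 2 = (y : ℂ) ^ 2 := by
    norm_cast; rw [Real.norm_eq_abs, sq_abs]
  rw [this]
  have h2 : -((y : ℂ) ^ 2 / 2) = -(1 / 2) * (y : ℂ) ^ 2 := by ring
  rw [h2]; ring

/-- The squeezed vacuum as a superposition of coherent states. -/
def zvec (e : HilbertBasis ℕ ℂ H) (r : ℝ) : H :=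
  (Real.exp (r / 2) : ℂ) • ∫ y, phi e y ∂(gaussianReal 0 (vr r))

lemma zvec_coeff (e : HilbertBasis ℕ ℂ H) (r : ℝ) (m : ℕ) : ⟪e m, zvec e r⟫ =
    (Real.exp (r / 2) : ℂ) * ((Complex.I ^ m / (Real.sqrt (Nat.factorial m) : ℂ)) *
      ((∫ y : ℝ, y ^ m * Real.exp (-(1 / 2) * y ^ 2) ∂(gaussianReal 0 (vr r)) : ℝ) : ℂ)) := by
  rw [zvec, inner_smul_right, ← integral_inner (phi_integrable e _)]
  congr 1
  simp_rw [phi, coh_inner_basis, cohC_phi]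
  rw [integral_const_mul, integral_complex_ofReal]

/-- coefficients of the squeezed vacuum -/
def sqC (r : ℝ) (m : ℕ) : ℝ := (((-Real.tanh r) ^ m * Real.sqrt (Nat.factorial (2 * m)) /
    (2 ^ m * (Nat.factorial m : ℝ))) / Real.sqrt (Real.cosh r) : ℝ)

lemma zvec_even (e : HilbertBasis ℕ ℂ H) {r : ℝ} (hr : 0 ≤ r) (k : ℕ) :
    ⟪e (2 * k), zvec e r⟫ = (sqC r k : ℂ) := by
  rw [zvec_coeff, gauss_moment _ zero_le_one, pow_mul, Complex.I_sq, one_mul, vr_one_add hr]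
  have h1 : (vr r : ℝ) / (Real.exp r * Real.cosh r) = Real.tanh r := by
    rw [vr_coe hr, Real.tanh_eq_sinh_div_cosh, mul_div_mul_left _ _ (Real.exp_pos r).ne']
  rw [h1, sqC]
  have h2 : √(Real.exp r * Real.cosh r) = Real.exp (r / 2) * √(Real.cosh r) := by
    rw [Real.sqrt_mul (Real.exp_pos r).le, Real.exp_half]
  rw [h2, neg_pow (Real.tanh r)]
  norm_cast
  have h3 := Real.exp_pos (r / 2)
  have h4 := Real.sqrt_pos.2 (Real.cosh_pos r)
  have h5 : 0 < √((2 * k).factorial : ℝ) := Real.sqrt_pos.2 (by positivity)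
  have h6 : √((2 * k).factorial : ℝ) ^ 2 = (2 * k).factorial := Real.sq_sqrt (by positivity)
  push_cast
  generalize √((2 * k).factorial : ℝ) = w at *
  rw [← h6]
  field_simp

lemma zvec_odd (e : HilbertBasis ℕ ℂ H) (r : ℝ) (k : ℕ) :
    ⟪e (2 * k + 1), zvec e r⟫ = 0 := by
  rw [zvec_coeff, gauss_odd]; simp

lemma zvec_hasSum (e : HilbertBasis ℕ ℂ H) {r : ℝ} (hr : 0 ≤ r) :
    HasSum (fun m => (sqC r m : ℂ) • e (2 * m)) (zvec e r) := by
  have h := e.hasSum_repr (zvec e r)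
  have hinj : Function.Injective (fun m : ℕ => 2 * m) := fun a b h => by simpa using h
  rw [← hinj.hasSum_iff] at h
  · convert h using 2 with m
    simp only [Function.comp, e.repr_apply_apply]
    rw [zvec_even e hr]
  · intro x hx
    rw [e.repr_apply_apply]
    obtain ⟨k, rfl | rfl⟩ := Nat.even_or_odd' x
    · exact absurd ⟨k, rfl⟩ hx
    · rw [zvec_odd, zero_smul]

lemma sqVac_eq (e : HilbertBasis ℕ ℂ H) {r : ℝ} (hr : 0 ≤ r) : sqVac e r = zvec e r :=
  (zvec_hasSum e hr).tsum_eq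

lemma coh_inner_zvec (e : HilbertBasis ℕ ℂ H) {t : ℝ} (ht : 0 ≤ t) (α : ℂ) :
    ⟪coh e α, zvec e t⟫ = Complex.exp (-((‖α‖ : ℂ) ^ 2 / 2)) *
      Complex.exp (-(Real.tanh t : ℂ) * (starRingEnd ℂ α) ^ 2 / 2) / (√(Real.cosh t) : ℂ) := by
  have h := (zvec_hasSum e ht).mapL (innerSL ℂ (coh e α))
  refine h.unique ?_
  have h2 := ((NormedSpace.expSeries_div_hasSum_exp
    (-(Real.tanh t : ℂ) * (starRingEnd ℂ α) ^ 2 / 2)).mul_left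
      (Complex.exp (-((‖α‖ : ℂ) ^ 2 / 2)))).div_const (√(Real.cosh t) : ℂ)
  rw [← Complex.exp_eq_exp_ℂ] at h2
  refine hasSum_congr_fn h2 fun m => ?_
  rw [innerSL_apply_apply, inner_smul_right, ← inner_conj_symm, coh_inner_basis, cohC, sqC]
  simp only [map_div₀, map_mul, map_pow, Complex.conj_ofReal, ← Complex.exp_conj, map_neg]
  rw [Complex.conj_ofNat]
  have h5 : (√((2 * m).factorial : ℝ) : ℂ) ≠ 0 := by
    norm_cast
    exact (Real.sqrt_pos.2 (by positivity)).ne'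
  have h4 : (√(Real.cosh t) : ℂ) ≠ 0 := by
    norm_cast
    exact (Real.sqrt_pos.2 (Real.cosh_pos t)).ne'
  have h6 : (m.factorial : ℂ) ≠ 0 := by exact_mod_cast m.factorial_ne_zero
  rw [div_pow, mul_pow, ← pow_mul]
  push_cast
  field_simp

lemma coh_overlap_le (e : HilbertBasis ℕ ℂ H) {t : ℝ} (ht : 0 ≤ t) (α : ℂ) :
    ‖⟪coh e α, zvec e t⟫‖ ^ 2 ≤ 1 / Real.cosh t := by
  rw [coh_inner_zvec e ht, norm_div, norm_mul, div_pow, Complex.norm_real,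
    Real.norm_of_nonneg (Real.sqrt_nonneg _), Real.sq_sqrt (Real.cosh_pos t).le]
  have hc := Real.cosh_pos t
  gcongr
  rw [← norm_mul, ← Complex.exp_add, Complex.norm_exp]
  refine pow_le_one₀ (Real.exp_pos _).le (Real.exp_le_one_iff.2 ?_)
  have h1 : (-(Real.tanh t : ℂ) * (starRingEnd ℂ α) ^ 2 / 2).re ≤ ‖α‖ ^ 2 / 2 := by
    refine (Complex.re_le_norm _).trans ?_
    rw [norm_div, norm_mul, norm_pow, RCLike.norm_conj, norm_neg, Complex.norm_real]
    have : ‖Real.tanh t‖ ≤ 1 := (Real.abs_tanh_lt_one t).le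
    simp only [Complex.norm_ofNat]
    gcongr
    exact mul_le_of_le_one_left (by positivity) this
  have h2 : (-((‖α‖ : ℂ) ^ 2 / 2)).re = -(‖α‖ ^ 2 / 2) := by norm_cast
  rw [Complex.add_re, h2]
  linarith

lemma phi_inner_zvec (e : HilbertBasis ℕ ℂ H) {t : ℝ} (ht : 0 ≤ t) (y : ℝ) :
    ⟪zvec e t, phi e y⟫ =
      ((Real.exp (-((1 - Real.tanh t) / 2) * y ^ 2) / √(Real.cosh t) : ℝ) : ℂ) := by
  rw [← inner_conj_symm, phi, coh_inner_zvec e ht, norm_mul, Complex.norm_I, one_mul,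
    Complex.norm_real]
  have h1 : ((‖y‖ : ℝ) : ℂ) ^ 2 = (y : ℂ) ^ 2 := by
    norm_cast; rw [Real.norm_eq_abs, sq_abs]
  have h2 : (starRingEnd ℂ (Complex.I * y)) ^ 2 = -(y : ℂ) ^ 2 := by
    simp [mul_pow]
  rw [h1, h2, ← Complex.exp_add]
  have h3 : -((y:ℂ) ^ 2 / 2) + -(Real.tanh t : ℂ) * -(y:ℂ) ^ 2 / 2 =
      ((-((1 - Real.tanh t) / 2) * y ^ 2 : ℝ) : ℂ) := by push_cast; ring
  rw [h3]
  rw [← Complex.ofReal_exp, ← Complex.ofReal_div, Complex.conj_ofReal]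

lemma zvec_overlap (e : HilbertBasis ℕ ℂ H) {r t : ℝ} (hr : 0 ≤ r) (ht : 0 ≤ t) :
    ⟪zvec e t, zvec e r⟫ = (((√(Real.cosh (t - r)))⁻¹ : ℝ) : ℂ) := by
  conv_lhs => rw [zvec.eq_1 e r]
  rw [inner_smul_right, ← integral_inner (phi_integrable e _)]
  simp_rw [phi_inner_zvec e ht]
  rw [integral_complex_ofReal, integral_div]
  have h := gauss_moment (vr r) (c := 1 - Real.tanh t) (by linarith [Real.tanh_lt_one t]) 0
  simp only [mul_zero, pow_zero, one_mul, Nat.factorial_zero, Nat.cast_one, div_one, mul_one] at h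
  rw [h]
  norm_cast
  have h2 := congrArg Real.sqrt (vr_one_add_mul hr t)
  rw [Real.sqrt_mul (Real.cosh_pos t).le, Real.sqrt_mul (Real.exp_pos r).le, ← Real.exp_half] at h2
  have h3 : ∀ a b : ℝ, a⁻¹ / b = (b * a)⁻¹ := fun a b => by rw [mul_inv]; ring
  rw [h3, h2]
  rw [mul_inv, ← mul_assoc, mul_inv_cancel₀ (Real.exp_pos _).ne', one_mul]

lemma zvec_norm (e : HilbertBasis ℕ ℂ H) {r : ℝ} (hr : 0 ≤ r) : ‖zvec e r‖ = 1 := by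
  have h := zvec_overlap e hr hr
  rw [sub_self, Real.cosh_zero, Real.sqrt_one, inv_one, inner_self_eq_norm_sq_to_K] at h
  have h2 : ‖zvec e r‖ ^ 2 = 1 := by
    have h3 : (((‖zvec e r‖ ^ 2 : ℝ)) : ℂ) = ((1 : ℝ) : ℂ) := by rw [← h]; norm_cast
    exact_mod_cast h3
  exact (pow_eq_one_iff_of_nonneg (norm_nonneg _) two_ne_zero).1 h2

end SqLemmas

section Mixtures
open MeasureTheory ProbabilityTheory NNReal

lemma projv_continuous : Continuous (projv : H → Op H) := by
  have h : (projv : H → Op H) =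
      fun ψ => ContinuousLinearMap.smulRightL ℂ H H (innerSL ℂ ψ) ψ := by
    funext ψ; ext x; simp [projv_apply]
  rw [h]
  exact ((ContinuousLinearMap.smulRightL ℂ H H).continuous.comp
    (innerSL ℂ (E := H)).continuous).clm_apply continuous_id

lemma projv_norm_le (ψ : H) (h : ‖ψ‖ = 1) : ‖projv ψ‖ ≤ 1 :=
  ContinuousLinearMap.opNorm_le_bound _ zero_le_one fun x => by
    rw [projv_apply, norm_smul, h, mul_one]
    refine (norm_inner_le_norm _ _).trans ?_
    rw [h]

/-- The Gaussian mixture of coherent states. -/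
def mix (e : HilbertBasis ℕ ℂ H) (μ : Measure ℝ) : Op H := ∫ y, projv (phi e y) ∂μ

variable (e : HilbertBasis ℕ ℂ H) (μ : Measure ℝ) [IsProbabilityMeasure μ]

lemma projphi_integrable : Integrable (fun y => projv (phi e y)) μ :=
  Integrable.of_bound (projv_continuous.comp (phi_continuous e)).aestronglyMeasurable 1
    (Eventually.of_forall fun y => projv_norm_le _ (phi_norm e y))

lemma phi_sq_continuous (x : H) : Continuous fun y => ‖⟪phi e y, x⟫‖ ^ 2 := by
  have := phi_continuous e
  fun_prop

lemma phi_inner_norm_le (x : H) (y : ℝ) : ‖⟪phi e y, x⟫‖ ≤ ‖x‖ := by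
  refine (norm_inner_le_norm _ _).trans ?_
  rw [phi_norm, one_mul]

lemma phi_sq_integrable (x : H) : Integrable (fun y => ‖⟪phi e y, x⟫‖ ^ 2) μ :=
  Integrable.of_bound (phi_sq_continuous e x).aestronglyMeasurable (‖x‖ ^ 2)
    (Eventually.of_forall fun y => by
      rw [Real.norm_of_nonneg (by positivity)]
      gcongr; exact phi_inner_norm_le e x y)

lemma mix_quad (x : H) : ⟪x, mix e μ x⟫ = ((∫ y, ‖⟪phi e y, x⟫‖ ^ 2 ∂μ : ℝ) : ℂ) := by
  have h := projphi_integrable e μ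
  rw [mix, ContinuousLinearMap.integral_apply h, ← integral_inner, ← integral_complex_ofReal]
  · simp_rw [projv_quad]
  · exact h.apply_continuousLinearMap x

lemma mix_hasSum : HasSum (fun n => (⟪e n, mix e μ (e n)⟫).re) 1 := by
  simp_rw [mix_quad, Complex.ofReal_re]
  have hp : ∀ y, HasSum (fun n => ‖⟪phi e y, e n⟫‖ ^ 2) 1 := fun y => by
    have := parseval e (phi e y)
    simp_rw [norm_inner_symm (e _), phi_norm, one_pow] at this
    exact this
  have hi := fun n => phi_sq_integrable e μ (e n)
  have hs : Summable fun n => ∫ y, ‖⟪phi e y, e n⟫‖ ^ 2 ∂μ := by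
    refine summable_of_sum_le (c := 1) (fun n => integral_nonneg fun y => by positivity) fun s => ?_
    rw [← integral_finsetSum _ fun n _ => hi n]
    have : ∫ y, ∑ n ∈ s, ‖⟪phi e y, e n⟫‖ ^ 2 ∂μ ≤ ∫ _, (1:ℝ) ∂μ :=
      integral_mono (integrable_finsetSum _ fun n _ => hi n) (integrable_const _) fun y =>
        sum_le_hasSum s (fun n _ => by positivity) (hp y)
    simpa using this
  have h := hasSum_integral_of_summable_integral_norm hi (by simpa using hs)
  simp_rw [(hp _).tsum_eq] at h
  simpa using h

lemma mix_dominates (x : H) :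
    ‖⟪∫ y, phi e y ∂μ, x⟫‖ ^ 2 ≤ ∫ y, ‖⟪phi e y, x⟫‖ ^ 2 ∂μ := by
  set c := ∫ y, ‖⟪phi e y, x⟫‖ ∂μ with hc
  have hcont : Continuous fun y => ‖⟪phi e y, x⟫‖ := by
    have := phi_continuous e
    fun_prop
  have hi : Integrable (fun y => ‖⟪phi e y, x⟫‖) μ :=
    Integrable.of_bound hcont.aestronglyMeasurable (‖x‖)
      (Eventually.of_forall fun y => by rw [norm_norm]; exact phi_inner_norm_le e x y)
  have h1 : ‖⟪∫ y, phi e y ∂μ, x⟫‖ ≤ c := by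
    rw [norm_inner_symm, ← integral_inner (phi_integrable e μ)]
    refine (norm_integral_le_integral_norm _).trans ?_
    simp_rw [norm_inner_symm x]
    exact le_rfl
  have h2 : 0 ≤ ∫ y, (‖⟪phi e y, x⟫‖ ^ 2 - (2 * c) * ‖⟪phi e y, x⟫‖ + c ^ 2) ∂μ :=
    integral_nonneg fun y => by
      have := sq_nonneg (‖⟪phi e y, x⟫‖ - c)
      simp only [Pi.zero_apply]
      nlinarith
  have hsub : Integrable (fun y => ‖⟪phi e y, x⟫‖ ^ 2 - (2 * c) * ‖⟪phi e y, x⟫‖) μ :=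
    (phi_sq_integrable e μ x).sub (hi.const_mul _)
  rw [integral_add hsub (integrable_const _),
    integral_sub (phi_sq_integrable e μ x) (hi.const_mul _), integral_const_mul, ← hc] at h2
  simp only [integral_const, probReal_univ, one_smul] at h2
  have h3 : ‖⟪∫ y, phi e y ∂μ, x⟫‖ ^ 2 ≤ c ^ 2 := by gcongr
  linarith

lemma mix_mem : mix e μ ∈ ClassicalStates e := by
  let s : ℕ → SimpleFunc ℝ ℝ := fun k =>
    SimpleFunc.approxOn (fun y : ℝ => y) measurable_id Set.univ 0 (Set.mem_univ _) k
  have hs : ∀ y, Tendsto (fun k => s k y) atTop (nhds y) := fun y =>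
    SimpleFunc.tendsto_approxOn measurable_id (Set.mem_univ _) (by simp)
  have hInt : ∀ k, Integrable (fun y => projv (phi e (s k y))) μ := fun k =>
    Integrable.of_bound (((s k).map fun y => projv (phi e y)).aestronglyMeasurable) 1
      (Eventually.of_forall fun y => projv_norm_le _ (phi_norm e _))
  refine ⟨fun k => ∫ y, projv (phi e (s k y)) ∂μ, fun k => ?_, ?_⟩
  · have hfin : (Set.range fun y => projv (phi e (s k y))).Finite :=
      ((s k).map fun y => projv (phi e y)).finite_range
    have h1 := (convex_convexHull ℝ _).integral_mem (hfin.isClosed_convexHull ℝ) (μ := μ)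
      (Eventually.of_forall fun y => subset_convexHull ℝ _ (Set.mem_range_self y)) (hInt k)
    refine convexHull_mono ?_ h1
    rintro _ ⟨y, rfl⟩
    exact ⟨_, rfl⟩
  · have hm : ∀ k, AEStronglyMeasurable (fun y => 2 * ‖phi e (s k y) - phi e y‖) μ := fun k =>
      ((((s k).map (phi e)).aestronglyMeasurable.sub
        (phi_continuous e).aestronglyMeasurable).norm).const_mul 2
    have hb : ∀ k y, ‖2 * ‖phi e (s k y) - phi e y‖‖ ≤ 4 := fun k y => by
      have := norm_sub_le (phi e (s k y)) (phi e y)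
      rw [phi_norm, phi_norm] at this
      rw [Real.norm_of_nonneg (by positivity)]; linarith
    have hlim : Tendsto (fun k => ∫ y, 2 * ‖phi e (s k y) - phi e y‖ ∂μ) atTop (nhds 0) := by
      have := tendsto_integral_of_dominated_convergence (μ := μ)
        (F := fun k y => 2 * ‖phi e (s k y) - phi e y‖) (f := fun _ => (0:ℝ)) (fun _ => (4:ℝ)) hm
        (integrable_const _) (fun k => Eventually.of_forall (hb k))
        (Eventually.of_forall fun y => by
          have h1 := ((phi_continuous e).tendsto y).comp (hs y)
          have h2 := (tendsto_iff_norm_sub_tendsto_zero.1 h1).const_mul 2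
          simpa using h2)
      simpa using this
    refine squeeze_zero (fun k => traceNorm_nonneg e _) (fun k => ?_) hlim
    refine traceNorm_le e _ _ fun f hf S => ?_
    have hd : Integrable (fun y => projv (phi e (s k y)) - projv (phi e y)) μ :=
      (hInt k).sub (projphi_integrable e μ)
    have hin : ∀ n, Integrable
        (fun y => ⟪e n, f ((projv (phi e (s k y)) - projv (phi e y)) (e n))⟫) μ := fun n =>
      (f.integrable_comp (hd.apply_continuousLinearMap (e n))).const_inner (e n)
    have h1 : ∑ n ∈ S, ⟪e n, f ((∫ y, projv (phi e (s k y)) ∂μ - mix e μ) (e n))⟫ =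
        ∫ y, ∑ n ∈ S, ⟪e n, f ((projv (phi e (s k y)) - projv (phi e y)) (e n))⟫ ∂μ := by
      rw [integral_finsetSum _ fun n _ => hin n]
      refine Finset.sum_congr rfl fun n _ => ?_
      rw [mix, ← integral_sub (hInt k) (projphi_integrable e μ), ContinuousLinearMap.integral_apply hd,
        ← f.integral_comp_comm (hd.apply_continuousLinearMap (e n)), ← integral_inner]
      exact f.integrable_comp (hd.apply_continuousLinearMap (e n))
    rw [h1]
    refine norm_integral_le_of_norm_le ?_ (Eventually.of_forall fun y =>
      projv_sub_bound e _ _ (phi_norm e _) (phi_norm e _) f hf S)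
    exact Integrable.of_bound (hm k) 4 (Eventually.of_forall (hb k))

end Mixtures

section Final
open MeasureTheory ProbabilityTheory NNReal

lemma isPositive_of_quad (T : Op H) (q : H → ℝ) (h : ∀ x, ⟪x, T x⟫ = (q x : ℂ))
    (hq : ∀ x, 0 ≤ q x) : T.IsPositive := by
  rw [ContinuousLinearMap.isPositive_iff_complex]
  intro x
  rw [← inner_conj_symm, h, Complex.conj_ofReal]
  exact ⟨by simp, by simpa using hq x⟩

lemma density_of (e : HilbertBasis ℕ ℂ H) (T : Op H) (q : H → ℝ) (h : ∀ x, ⟪x, T x⟫ = (q x : ℂ))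
    (hq : ∀ x, 0 ≤ q x) (hs : HasSum (fun n => q (e n)) 1) : IsDensity e T := by
  refine ⟨isPositive_of_quad T q h hq, ?_, ?_⟩
  · simp_rw [h, Complex.ofReal_re]; exact hs.summable
  · unfold trB
    simp_rw [h]
    rw [← Complex.ofReal_tsum, hs.tsum_eq, Complex.ofReal_one]

lemma real_smul_quad (c : ℝ) (T : Op H) (x : H) : ⟪x, (c • T) x⟫ = (c : ℂ) * ⟪x, T x⟫ := by
  rw [← inner_smul_right]
  simp

lemma upper (e : HilbertBasis ℕ ℂ H) (r : ℝ) (hr : 0 ≤ r) :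
    Robustness e (ClassicalStates e) (projv (sqVac e r)) ≤ ENNReal.ofReal (Real.exp r) := by
  rw [sqVac_eq e hr]
  have hle := Real.one_le_exp hr
  have hz := zvec_norm e hr
  have hnn : 0 ≤ Real.exp r - 1 := by linarith
  refine sInf_le ⟨Real.exp r - 1, hnn, ?_⟩
  have h1 : 1 + (Real.exp r - 1) = Real.exp r := by ring
  rw [h1]
  have hquad : ∀ x, ‖⟪zvec e r, x⟫‖ ^ 2 ≤
      Real.exp r * ∫ y, ‖⟪phi e y, x⟫‖ ^ 2 ∂(gaussianReal 0 (vr r)) := by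
    intro x
    rw [zvec, inner_smul_left, norm_mul, mul_pow, RCLike.norm_conj, Complex.norm_real,
      Real.norm_of_nonneg (Real.exp_pos _).le, ← Real.exp_nat_mul]
    have : ((2:ℕ):ℝ) * (r / 2) = r := by push_cast; ring
    rw [this]
    exact mul_le_mul_of_nonneg_left (mix_dominates e _ x) (Real.exp_pos r).le
  rcases hr.eq_or_lt with h0 | h0
  · subst h0
    refine ⟨projv (zvec e 0), ?_, ?_, rfl⟩
    · refine density_of e _ _ (projv_quad _) (fun x => by positivity) ?_
      have := projv_hasSum e (zvec e 0)
      simp_rw [projv_quad, Complex.ofReal_re, hz, one_pow] at this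
      exact this
    · have hv : vr 0 = 0 := by simp [vr]
      have hzz : projv (zvec e 0) = mix e (gaussianReal 0 (vr 0)) := by
        rw [zvec, mix, hv, gaussianReal_zero_var, integral_dirac, integral_dirac]
        simp
      rw [Real.exp_zero, sub_self, zero_smul, add_zero, inv_one, one_smul, hzz]
      exact mix_mem e _
  · have hpos : 0 < Real.exp r - 1 := by linarith [Real.add_one_lt_exp h0.ne']
    refine ⟨(Real.exp r - 1)⁻¹ • (Real.exp r • mix e (gaussianReal 0 (vr r)) - projv (zvec e r)),
      ?_, ?_, rfl⟩
    · refine density_of e _ (fun x => (Real.exp r - 1)⁻¹ *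
        (Real.exp r * ∫ y, ‖⟪phi e y, x⟫‖ ^ 2 ∂(gaussianReal 0 (vr r)) - ‖⟪zvec e r, x⟫‖ ^ 2))
        (fun x => ?_) (fun x => ?_) ?_
      · rw [real_smul_quad, sub_apply, inner_sub_right, real_smul_quad,
          mix_quad, projv_quad]
        push_cast; rfl
      · exact mul_nonneg (by positivity) (sub_nonneg.2 (hquad x))
      · have ha := mix_hasSum e (gaussianReal 0 (vr r))
        simp_rw [mix_quad, Complex.ofReal_re] at ha
        have hb := projv_hasSum e (zvec e r)
        simp_rw [projv_quad, Complex.ofReal_re, hz, one_pow] at hb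
        have hc := ((ha.mul_left (Real.exp r)).sub hb).mul_left (Real.exp r - 1)⁻¹
        rwa [mul_one, inv_mul_cancel₀ hpos.ne'] at hc
    · rw [smul_inv_smul₀ hpos.ne', add_sub_cancel, inv_smul_smul₀ (Real.exp_pos r).ne']
      exact mix_mem e _

/-- The witness inequality for classical states. -/
lemma classical_le (e : HilbertBasis ℕ ℂ H) {t : ℝ} (ht : 0 ≤ t) (T : Op H) (hT : T.IsPositive)
    (hTs : Summable fun n => (⟪e n, T (e n)⟫).re) (hmem : T ∈ ClassicalStates e) :
    (⟪zvec e t, T (zvec e t)⟫).re ≤ 1 / Real.cosh t := by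
  obtain ⟨u, hu, hlim⟩ := hmem
  have hconv : ∀ k, (u k).IsPositive ∧ (Summable fun n => (⟪e n, u k (e n)⟫).re) ∧
      (⟪zvec e t, u k (zvec e t)⟫).re ≤ 1 / Real.cosh t := by
    intro k
    have hsub : convexHull ℝ {T : Op H | ∃ α : ℂ, T = projv (coh e α)} ⊆
        {T : Op H | T.IsPositive ∧ (Summable fun n => (⟪e n, T (e n)⟫).re) ∧
          (⟪zvec e t, T (zvec e t)⟫).re ≤ 1 / Real.cosh t} := by
      refine convexHull_min ?_ ?_
      · rintro _ ⟨α, rfl⟩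
        refine ⟨projv_pos _, (projv_hasSum e _).summable, ?_⟩
        rw [projv_quad, Complex.ofReal_re]
        exact coh_overlap_le e ht α
      · rintro A ⟨hA1, hA2, hA3⟩ B ⟨hB1, hB2, hB3⟩ a b ha hb hab
        have hq : ∀ x, (⟪x, (a • A + b • B) x⟫).re = a * (⟪x, A x⟫).re + b * (⟪x, B x⟫).re := by
          intro x
          rw [add_apply, inner_add_right, real_smul_quad, real_smul_quad,
            Complex.add_re, Complex.re_ofReal_mul, Complex.re_ofReal_mul]
        refine ⟨?_, ?_, ?_⟩
        · have h1 := hA1.smul_of_nonneg (c := (a : ℂ)) (by exact_mod_cast ha)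
          have h2 := hB1.smul_of_nonneg (c := (b : ℂ)) (by exact_mod_cast hb)
          simpa using h1.add h2
        · simp_rw [hq]
          exact (hA2.mul_left a).add (hB2.mul_left b)
        · rw [hq]
          calc _ ≤ a * (1 / Real.cosh t) + b * (1 / Real.cosh t) := by gcongr
            _ = _ := by rw [← add_mul, hab, one_mul]
    exact hsub (hu k)
  have hbound : ∀ k, (⟪zvec e t, T (zvec e t)⟫).re ≤ 1 / Real.cosh t + traceNorm e (u k - T) := by
    intro k
    obtain ⟨h1, h2, h3⟩ := hconv k
    have h4 := norm_le_trace e (u k - T)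
      (absOp_summable e _ _ (sub_bound e (u k) T h1 hT h2 hTs)) (zvec e t)
    rw [zvec_norm e ht, mul_one] at h4
    have h5 : ‖⟪zvec e t, (u k - T) (zvec e t)⟫‖ ≤ traceNorm e (u k - T) := by
      refine (norm_inner_le_norm _ _).trans ?_
      rwa [zvec_norm e ht, one_mul]
    have h6 := (abs_le.1 ((Complex.abs_re_le_norm _).trans h5)).1
    rw [sub_apply, inner_sub_right, Complex.sub_re] at h6
    linarith
  have h7 := hlim.const_add (1 / Real.cosh t)
  rw [add_zero] at h7
  exact ge_of_tendsto' h7 hbound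

lemma lower (e : HilbertBasis ℕ ℂ H) (r : ℝ) (hr : 0 ≤ r) :
    ENNReal.ofReal (Real.exp r) ≤ Robustness e (ClassicalStates e) (projv (sqVac e r)) := by
  rw [sqVac_eq e hr]
  refine le_sInf ?_
  rintro _ ⟨lam, hlam, τ, ⟨hτ1, hτ2, -⟩, hmem, rfl⟩
  apply ENNReal.ofReal_le_ofReal
  have hL : 0 < 1 + lam := by linarith
  have hq : ∀ x, (⟪x, ((1 + lam)⁻¹ • (projv (zvec e r) + lam • τ)) x⟫).re =
      (1 + lam)⁻¹ * (‖⟪zvec e r, x⟫‖ ^ 2 + lam * (⟪x, τ x⟫).re) := by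
    intro x
    rw [real_smul_quad, add_apply, inner_add_right, real_smul_quad,
      Complex.re_ofReal_mul, Complex.add_re, Complex.re_ofReal_mul, projv_quad, Complex.ofReal_re]
  have hpos : ((1 + lam)⁻¹ • (projv (zvec e r) + lam • τ)).IsPositive := by
    have h1 := hτ1.smul_of_nonneg (c := (lam : ℂ)) (by exact_mod_cast hlam)
    have h2 := ((projv_pos (zvec e r)).add h1).smul_of_nonneg (c := (((1 + lam)⁻¹ : ℝ) : ℂ))
      (by exact_mod_cast (inv_nonneg.2 hL.le))
    simpa only [Complex.coe_smul] using h2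
  have hsum : Summable fun n => (⟪e n, ((1 + lam)⁻¹ • (projv (zvec e r) + lam • τ)) (e n)⟫).re := by
    simp_rw [hq]
    have := (projv_hasSum e (zvec e r)).summable
    simp_rw [projv_quad, Complex.ofReal_re] at this
    exact (this.add (hτ2.mul_left lam)).mul_left _
  have key : ∀ t : ℝ, 0 ≤ t → Real.cosh t ≤ (1 + lam) * Real.cosh (t - r) := by
    intro t ht
    have h := classical_le e ht _ hpos hsum hmem
    have h0 := hτ1.re_inner_nonneg_right (zvec e t)
    simp only [RCLike.re_eq_complex_re] at h0
    have hc := Real.cosh_pos t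
    have hc' := Real.cosh_pos (t - r)
    rw [hq, norm_inner_symm, zvec_overlap e hr ht, Complex.norm_real,
      Real.norm_of_nonneg (by positivity), inv_pow, Real.sq_sqrt hc'.le] at h
    have h1 : (1 + lam)⁻¹ * (Real.cosh (t - r))⁻¹ ≤ 1 / Real.cosh t := by
      refine le_trans ?_ h
      gcongr
      have := mul_nonneg hlam h0
      linarith
    rw [← mul_inv, one_div] at h1
    exact (inv_le_inv₀ (by positivity) hc).1 h1
  have key2 : ∀ t : ℝ, 0 ≤ t → Real.exp r + Real.exp r * Real.exp (-(2 * t)) ≤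
      (1 + lam) * (1 + Real.exp (2 * r) * Real.exp (-(2 * t))) := by
    intro t ht
    have h := key t ht
    rw [Real.cosh_eq, Real.cosh_eq] at h
    have h2 := mul_le_mul_of_nonneg_left h (Real.exp_pos (r - t)).le
    have e1 : Real.exp (r - t) * ((Real.exp t + Real.exp (-t)) / 2) =
        (Real.exp r + Real.exp r * Real.exp (-(2 * t))) / 2 := by
      rw [mul_div_assoc', mul_add, ← Real.exp_add, ← Real.exp_add, ← Real.exp_add]
      ring_nf
    have e2 : Real.exp (r - t) * ((1 + lam) * ((Real.exp (t - r) + Real.exp (-(t - r))) / 2)) =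
        (1 + lam) * (1 + Real.exp (2 * r) * Real.exp (-(2 * t))) / 2 := by
      have a1 : Real.exp (r - t) * Real.exp (t - r) = 1 := by
        rw [← Real.exp_add]; simp
      have a2 : Real.exp (r - t) * Real.exp (-(t - r)) = Real.exp (2 * r) * Real.exp (-(2 * t)) := by
        rw [← Real.exp_add, ← Real.exp_add]; ring_nf
      rw [← a2, ← a1]; ring
    rw [e1, e2] at h2
    linarith
  have hlim : Tendsto (fun t : ℝ => Real.exp (-(2 * t))) atTop (nhds 0) :=
    Real.tendsto_exp_neg_atTop_nhds_zero.comp (tendsto_id.const_mul_atTop two_pos)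
  have l1 := (hlim.const_mul (Real.exp r)).const_add (Real.exp r)
  have l2 := ((hlim.const_mul (Real.exp (2 * r))).const_add 1).const_mul (1 + lam)
  have := le_of_tendsto_of_tendsto l1 l2 (eventually_atTop.2 ⟨0, key2⟩)
  simpa using this

end Final

/-- the generalized robustness of nonclassicality of the squeezed vacuum is
`R_C(ζ_r) = e^r` for all `r ≥ 0`. -/
theorem robustness_nonclassicality_squeezed (e : HilbertBasis ℕ ℂ H) (r : ℝ) (hr : 0 ≤ r) :
    Robustness e (ClassicalStates e) (projv (sqVac e r)) = ENNReal.ofReal (Real.exp r) := by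
  exact le_antisymm (upper e r hr) (lower e r hr)
end
end

section
/- The Hilbert matrix operator H₋₁ with entries (H₋₁)_{n,m} = 1/(n−m) for n ≠ m and 0 for n = m (n,m ≥ 1) defines a bounded operator on ℓ²(ℕ) with operator norm at most π, so ω_± = (1/c) D(𝟙 ± (i/π)H₋₁) D are positive trace-class operators, where D = Σ_{n≥1} (1/(√n ln(n+1)))|n⟩⟨n| and c = Tr[D²]. -/
noncomputable section
open scoped ENNReal ComplexOrder
open Filter

variable {H : Type} [NormedAddCommGroup H] [InnerProductSpace ℂ H] [CompleteSpace H]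

local notation "⟪" x ", " y "⟫" => @inner ℂ _ _ x y

theorem hms_op_ext (e : HilbertBasis ℕ ℂ H) (A B : Op H)
    (h : ∀ n m : ℕ, ⟪e n, A (e m)⟫ = ⟪e n, B (e m)⟫) : A = B := by
  refine ContinuousLinearMap.ext_on (s := Set.range e) ?_ ?_
  · rw [dense_iff_closure_eq]
    have := e.dense_span
    exact congrArg (fun s : Submodule ℂ H => (s : Set H)) this
  · rintro _ ⟨m, rfl⟩
    apply e.repr.injective
    ext n
    simpa only [e.repr_apply_apply] using h n m

theorem hms_diag (e : HilbertBasis ℕ ℂ H) (d : ℕ → ℝ) (C : ℝ) (hC : 0 ≤ C)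
    (hd : ∀ n, |d n| ≤ C) :
    ∃ D : Op H, ∀ m : ℕ, D (e m) = (d m : ℂ) • e m := by
  have hle : ∀ (x : lp (fun _ : ℕ => ℂ) 2) (n : ℕ), ‖(d n : ℂ) * x n‖ ≤ ‖((C : ℂ) • x) n‖ := by
    intro x n
    rw [norm_mul, lp.coeFn_smul, Pi.smul_apply, norm_smul]
    gcongr
    simpa [abs_of_nonneg hC] using hd n
  have hmem : ∀ x : lp (fun _ : ℕ => ℂ) 2, Memℓp (fun n => (d n : ℂ) * x n) 2 :=
    fun x => (lp.memℓp ((C : ℂ) • x)).mono' (hle x)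
  let L : lp (fun _ : ℕ => ℂ) 2 →ₗ[ℂ] lp (fun _ : ℕ => ℂ) 2 :=
    { toFun := fun x => ⟨fun n => (d n : ℂ) * x n, hmem x⟩
      map_add' := by
        intro x y; ext n
        exact mul_add _ _ _
      map_smul' := by
        intro a x; ext n
        exact mul_left_comm _ _ _ }
  let L' := L.mkContinuous C (by
    intro x
    have h1 : ‖L x‖ ≤ ‖(C : ℂ) • x‖ := lp.norm_mono (by norm_num) (hle x)
    rw [norm_smul] at h1
    simpa [abs_of_nonneg hC] using h1)
  refine ⟨(e.repr.symm : _ →L[ℂ] H) ∘L L' ∘L (e.repr : H →L[ℂ] _), fun m => ?_⟩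
  change e.repr.symm (L (e.repr (e m))) = _
  apply e.repr.injective
  rw [LinearIsometryEquiv.apply_symm_apply, map_smul, e.repr_self]
  ext n
  change (d n : ℂ) * (lp.single 2 m (1 : ℂ) : lp (fun _ : ℕ => ℂ) 2) n = (d m : ℂ) * (lp.single 2 m (1 : ℂ) : lp (fun _ : ℕ => ℂ) 2) n
  rw [lp.single_apply]
  by_cases hnm : n = m
  · subst hnm; rfl
  · simp [Pi.single_apply, hnm]

theorem hms_isometry {K : Type} [NormedAddCommGroup K] [InnerProductSpace ℂ K] [CompleteSpace K]
    (e : HilbertBasis ℕ ℂ H) (v : ℕ → K) (hv : Orthonormal ℂ v) :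
    ∃ V : H →L[ℂ] K, ‖V‖ ≤ 1 ∧ ∀ n, V (e n) = v n := by
  let W := hv.orthogonalFamily.linearIsometry
  refine ⟨W.toContinuousLinearMap ∘L (e.repr : H →L[ℂ] _), ?_, fun n => ?_⟩
  · refine ContinuousLinearMap.opNorm_le_bound _ zero_le_one fun x => ?_
    change ‖W (e.repr x)‖ ≤ _
    simp
  · change W (e.repr (e n)) = _
    rw [e.repr_self]
    simp [W, LinearIsometry.toSpanSingleton_apply]

theorem hms_bern_bound (x : UnitAddCircle) : |periodizedBernoulli 1 x| ≤ 1 / 2 := by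
  obtain ⟨y, hy, rfl⟩ : ∃ y ∈ Set.Ico (0:ℝ) (0 + 1), (y : UnitAddCircle) = x :=
    ⟨_, (AddCircle.equivIco 1 0 x).2, (AddCircle.coe_equivIco)⟩
  rw [periodizedBernoulli, AddCircle.liftIco_coe_apply hy, bernoulliFun_one, abs_le]
  constructor <;> linarith [hy.1, hy.2]

theorem hms_bern_meas : Measurable (periodizedBernoulli 1) := by
  have h : periodizedBernoulli 1 =
     fun x => bernoulliFun 1 ((AddCircle.measurableEquivIco (T := 1) 0 x : Set.Ico (0:ℝ) (0+1)) : ℝ) := by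
    funext x; rfl
  rw [h]
  have : Continuous (bernoulliFun 1) := Polynomial.continuous _
  exact this.measurable.comp (measurable_subtype_coe.comp (AddCircle.measurableEquivIco 1 0).measurable)

theorem hms_mul (μ : MeasureTheory.Measure UnitAddCircle) (φ : UnitAddCircle → ℂ) (hm : Measurable φ) (C : ℝ) (hC : 0 ≤ C)
    (hφ : ∀ x, ‖φ x‖ ≤ C) :
    ∃ M : MeasureTheory.Lp ℂ 2 μ →L[ℂ] MeasureTheory.Lp ℂ 2 μ, ‖M‖ ≤ C ∧ ∀ f, M f =ᵐ[μ] fun x => φ x * f x := by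
  have hmem : MeasureTheory.MemLp φ ∞ μ :=
    MeasureTheory.memLp_top_of_bound hm.aestronglyMeasurable C (.of_forall hφ)
  refine ⟨(ContinuousLinearMap.mul ℂ ℂ).holderL μ ∞ 2 2 hmem.toLp, ?_, fun f => ?_⟩
  · refine ContinuousLinearMap.opNorm_le_bound _ hC fun f => ?_
    refine (ContinuousLinearMap.norm_holder_apply_apply_le _ _ _).trans ?_
    gcongr
    rw [ContinuousLinearMap.opNorm_mul, one_mul, MeasureTheory.Lp.norm_toLp]
    refine ENNReal.toReal_le_of_le_ofReal hC ?_
    rw [MeasureTheory.eLpNorm_exponent_top]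
    exact MeasureTheory.eLpNormEssSup_le_of_ae_bound (.of_forall hφ)
  · have h1 := ContinuousLinearMap.coeFn_holder (r := 2) (ContinuousLinearMap.mul ℂ ℂ) hmem.toLp f
    refine h1.trans ?_
    filter_upwards [hmem.coeFn_toLp] with x hx
    simp [hx]

theorem hms_hilbert (e : HilbertBasis ℕ ℂ H) :
    ∃ A : Op H, ‖A‖ ≤ Real.pi ∧ ∀ n m : ℕ, ⟪e n, A (e m)⟫ =
        if n = m then 0 else ((((n : ℝ) - (m : ℝ))⁻¹ : ℝ) : ℂ) := by
  obtain ⟨V, hV, hVe⟩ := hms_isometry e (fun n : ℕ => fourierLp (T := 1) 2 (n : ℤ))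
    (orthonormal_fourier.comp _ Nat.cast_injective)
  let φ : UnitAddCircle → ℂ := fun x => (-(2 * Real.pi * Complex.I)) * (periodizedBernoulli 1 x : ℂ)
  have hφ : ∀ x, ‖φ x‖ ≤ Real.pi := by
    intro x
    have := hms_bern_bound x
    simp only [φ, norm_mul, norm_neg, Complex.norm_real, Complex.norm_I, Complex.norm_ofNat, Real.norm_eq_abs,
      abs_of_pos Real.pi_pos]
    nlinarith [Real.pi_pos]
  obtain ⟨M, hM, hMf⟩ := hms_mul AddCircle.haarAddCircle φ
    ((Complex.measurable_ofReal.comp hms_bern_meas).const_mul _) Real.pi Real.pi_pos.le hφ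
  refine ⟨ContinuousLinearMap.adjoint V ∘L M ∘L V, ?_, fun n m => ?_⟩
  · calc _ ≤ ‖ContinuousLinearMap.adjoint V‖ * (‖M‖ * ‖V‖) :=
          (ContinuousLinearMap.opNorm_comp_le _ _).trans (by gcongr; exact ContinuousLinearMap.opNorm_comp_le _ _)
      _ ≤ 1 * (Real.pi * 1) := by
          rw [LinearIsometryEquiv.norm_map]
          gcongr
      _ = _ := by ring
  · have h1 : ⟪e n, (ContinuousLinearMap.adjoint V ∘L M ∘L V) (e m)⟫
        = ⟪fourierLp (T := 1) 2 (n : ℤ), M (fourierLp (T := 1) 2 (m : ℤ))⟫ := by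
      simp only [ContinuousLinearMap.comp_apply, ContinuousLinearMap.adjoint_inner_right, hVe]
    have h2 : ⟪fourierLp (T := 1) 2 (n : ℤ), M (fourierLp (T := 1) 2 (m : ℤ))⟫
       = (-(2 * Real.pi * Complex.I)) * fourierCoeff ((↑) ∘ periodizedBernoulli 1 : UnitAddCircle → ℂ) ((n : ℤ) - m) := by
      rw [MeasureTheory.L2.inner_def, fourierCoeff, ← MeasureTheory.integral_const_mul]
      apply MeasureTheory.integral_congr_ae
      filter_upwards [hMf (fourierLp (T := 1) 2 (m : ℤ)), coeFn_fourierLp (T := 1) 2 (n : ℤ),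
        coeFn_fourierLp (T := 1) 2 (m : ℤ)] with x h1 h2 h3
      rw [h1, h2, h3, neg_sub, sub_eq_add_neg, fourier_add, fourier_neg]
      simp only [RCLike.inner_apply, φ, Function.comp, smul_eq_mul]
      ring
    rw [h1, h2, fourierCoeff_bernoulli_eq one_ne_zero]
    split_ifs with h
    · subst h; simp
    · have h3 : ((n : ℂ) - m) ≠ 0 := sub_ne_zero.2 (by exact_mod_cast h)
      have h4 : (Real.pi : ℂ) ≠ 0 := by exact_mod_cast Real.pi_ne_zero
      have h5 := Complex.I_ne_zero
      push_cast
      simp only [Nat.factorial_one, pow_one, Nat.cast_one]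
      field_simp

theorem hms_summable : Summable (fun n : ℕ => ((Real.sqrt (n + 1) * Real.log (n + 2))⁻¹) ^ 2) := by
  have key : Summable (fun n : ℕ => ((n : ℝ) * Real.log (n + 1) ^ 2)⁻¹) := by
    rw [← summable_condensed_iff_of_nonneg]
    · have hs : Summable (fun k : ℕ => (Real.log 2 ^ 2)⁻¹ * ((k : ℝ) ^ 2)⁻¹) :=
        (Real.summable_nat_pow_inv.2 one_lt_two).mul_left _
      rw [← summable_nat_add_iff 1] at hs ⊢
      refine Summable.of_nonneg_of_le (fun k => by positivity) (fun k => ?_) hs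
      have hl : ((k + 1 : ℕ) : ℝ) * Real.log 2 ≤ Real.log ((2 : ℝ) ^ (k + 1) + 1) := by
        rw [← Real.log_pow]
        apply Real.log_le_log (by positivity); linarith
      have h2 : 0 < Real.log 2 := Real.log_pos one_lt_two
      have hk : (0:ℝ) < ((k + 1 : ℕ) : ℝ) := by positivity
      push_cast at hl hk ⊢
      rw [mul_inv, ← mul_assoc, mul_inv_cancel₀ (by positivity), one_mul, ← mul_inv, ← mul_pow]
      apply inv_anti₀ (by positivity)
      apply pow_le_pow_left₀ (by positivity)
      linarith
    · intro n; positivity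
    · intro m n hm hmn
      have hm' : (0:ℝ) < m := by exact_mod_cast hm
      have hl : 0 < Real.log ((m : ℝ) + 1) := Real.log_pos (by linarith)
      have : (m : ℝ) ≤ n := by exact_mod_cast hmn
      apply inv_anti₀ (by positivity)
      gcongr
  rw [← summable_nat_add_iff 1] at key
  refine key.congr fun n => ?_
  rw [inv_pow, mul_pow, Real.sq_sqrt (by positivity)]
  push_cast
  rw [add_assoc (n : ℝ) 1 1, one_add_one_eq_two]

theorem hms_pos (A : Op H) (hA : IsSelfAdjoint A) (hn : ‖A‖ ≤ 1) :
    (ContinuousLinearMap.id ℂ H + A).IsPositive := by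
  refine ContinuousLinearMap.isPositive_def'.2 ⟨(IsSelfAdjoint.one (Op H)).add hA, fun x => ?_⟩
  rw [ContinuousLinearMap.reApplyInnerSelf_apply, ContinuousLinearMap.add_apply, inner_add_left, map_add]
  have h1 : |RCLike.re ⟪A x, x⟫| ≤ ‖x‖ * ‖x‖ := by
    refine (RCLike.abs_re_le_norm _).trans ((norm_inner_le_norm _ _).trans ?_)
    gcongr
    exact (A.le_opNorm x).trans (by nlinarith [norm_nonneg x])
  have h2 : RCLike.re ⟪x, x⟫ = ‖x‖ * ‖x‖ := by
    rw [inner_self_eq_norm_mul_norm]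
  simp only [ContinuousLinearMap.id_apply]
  rw [h2]
  linarith [(abs_le.1 h1).1]

/-- the Hilbert matrix `(H₋₁)ₙₘ = 1/(n - m)` (off-diagonal, skew-symmetric) is a
bounded operator of norm at most `π`, and `ω± = c⁻¹ D(𝟙 ± (i/π)H₋₁)D` with
`D = diag(1/(√n ln(n+1)))`, `c = Tr D²`, are positive trace-class operators of unit trace.
(Indices are shifted so that the `ℕ`-indexed basis vector `e n` is `|n+1⟩`.) -/
theorem hilbert_matrix_states (e : HilbertBasis ℕ ℂ H)
    (c : ℝ) (hc : c = ∑' n : ℕ, ((Real.sqrt (n + 1) * Real.log (n + 2))⁻¹) ^ 2) :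
    ∃ Hm D : Op H,
      (∀ n m : ℕ, ⟪e n, Hm (e m)⟫ =
        if n = m then 0 else ((((n : ℝ) - (m : ℝ))⁻¹ : ℝ) : ℂ)) ∧
      ‖Hm‖ ≤ Real.pi ∧
      (∀ n m : ℕ, ⟪e n, D (e m)⟫ =
        if n = m then (((Real.sqrt (n + 1) * Real.log (n + 2))⁻¹ : ℝ) : ℂ) else 0) ∧
      (∀ s : ℝ, s = 1 ∨ s = -1 →
        ∀ ω : Op H,
          ω = (c⁻¹ : ℝ) •
            (D ∘L (ContinuousLinearMap.id ℂ H + (s / Real.pi) • (Complex.I • Hm)) ∘L D) →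
          ω.IsPositive ∧ Summable (fun n : ℕ => (⟪e n, ω (e n)⟫).re) ∧ trB e ω = 1) := by
  set d : ℕ → ℝ := fun n => (Real.sqrt (n + 1) * Real.log (n + 2))⁻¹ with hd
  have hsum : Summable (fun n => d n ^ 2) := hms_summable
  have hdpos : ∀ n, 0 < d n := by
    intro n
    have : 0 < Real.log ((n : ℝ) + 2) := Real.log_pos (by linarith [n.cast_nonneg (α := ℝ)])
    simp only [hd]
    positivity
  have hcpos : 0 < c := by
    rw [hc]
    exact hsum.tsum_pos (fun n => sq_nonneg _) 0 (pow_pos (hdpos 0) 2)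
  have hdle : ∀ n, |d n| ≤ Real.sqrt c := by
    intro n
    apply Real.abs_le_sqrt
    rw [hc]
    exact hsum.le_tsum n (fun _ _ => sq_nonneg _)
  obtain ⟨Hm, hHn, hH⟩ := hms_hilbert e
  obtain ⟨D, hD⟩ := hms_diag e d _ (Real.sqrt_nonneg c) hdle
  have hee : ∀ n m : ℕ, ⟪e n, e m⟫ = if n = m then (1 : ℂ) else 0 :=
    fun n m => orthonormal_iff_ite.1 e.orthonormal n m
  have hDe : ∀ n m : ℕ, ⟪e n, D (e m)⟫ = if n = m then ((d n : ℝ) : ℂ) else 0 := by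
    intro n m
    rw [hD, inner_smul_right, hee]
    split_ifs with h
    · subst h; simp
    · simp
  have hDsa : ContinuousLinearMap.adjoint D = D := by
    apply hms_op_ext e
    intro n m
    rw [ContinuousLinearMap.adjoint_inner_right, ← inner_conj_symm, hDe, hDe]
    by_cases h : n = m
    · subst h; simp
    · simp [h, Ne.symm h]
  have hHsa : ContinuousLinearMap.adjoint Hm = -Hm := by
    apply hms_op_ext e
    intro n m
    rw [ContinuousLinearMap.adjoint_inner_right, ← inner_conj_symm, hH, ContinuousLinearMap.neg_apply,
      inner_neg_right, hH]
    by_cases h : n = m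
    · subst h; simp
    · rw [if_neg h, if_neg (Ne.symm h), Complex.conj_ofReal, ← Complex.ofReal_neg, ← inv_neg, neg_sub]
  refine ⟨Hm, D, hH, hHn, hDe, ?_⟩
  intro s hs ω hω
  have hs1 : |s| = 1 := by rcases hs with rfl | rfl <;> simp
  set A : Op H := (s / Real.pi) • (Complex.I • Hm) with hA
  have hAn : ‖A‖ ≤ 1 := by
    rw [hA, norm_smul, norm_smul, Complex.norm_I, one_mul, norm_div, Real.norm_eq_abs, hs1,
      Real.norm_eq_abs, abs_of_pos Real.pi_pos, one_div, inv_mul_le_iff₀ Real.pi_pos, mul_one]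
    exact hHn
  have hAC : A = (((s / Real.pi : ℝ) : ℂ) * Complex.I) • Hm := by
    rw [hA, ← smul_smul, Complex.coe_smul]
  have hAsa : IsSelfAdjoint A := by
    rw [hAC, ContinuousLinearMap.isSelfAdjoint_iff', map_smulₛₗ, hHsa]
    simp
  have hpos : (D ∘L (ContinuousLinearMap.id ℂ H + A) ∘L D).IsPositive := by
    have := (hms_pos A hAsa hAn).conj_adjoint D
    rwa [hDsa] at this
  have hentry : ∀ n, ⟪e n, ω (e n)⟫ = ((c⁻¹ * d n ^ 2 : ℝ) : ℂ) := by
    intro n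
    have hAe : ⟪e n, A (e n)⟫ = 0 := by
      rw [hAC, ContinuousLinearMap.smul_apply, inner_smul_right, hH]; simp
    have h1 : ⟪e n, (D ∘L (ContinuousLinearMap.id ℂ H + A) ∘L D) (e n)⟫ = ((d n ^ 2 : ℝ) : ℂ) := by
      rw [← hDsa]
      simp only [ContinuousLinearMap.comp_apply]
      rw [ContinuousLinearMap.adjoint_inner_right, hDsa, hD, map_smul, inner_smul_left,
        inner_smul_right, ContinuousLinearMap.add_apply, inner_add_right, hAe,
        ContinuousLinearMap.id_apply, hee]
      simp [sq]
    rw [hω, ContinuousLinearMap.smul_apply, ← Complex.coe_smul, inner_smul_right, h1]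
    push_cast; ring
  refine ⟨?_, ?_, ?_⟩
  · rw [hω, ← Complex.coe_smul]
    exact hpos.smul_of_nonneg (by exact_mod_cast (inv_pos.2 hcpos).le)
  · simp only [hentry, Complex.ofReal_re]
    exact hsum.mul_left _
  · simp only [trB, hentry]
    rw [← Complex.ofReal_tsum, tsum_mul_left, ← hc, inv_mul_cancel₀ hcpos.ne', Complex.ofReal_one]
end
end
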